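/- Let E, F : (0,∞) → ℝ satisfy condition (C₁) (for all t, s > 0, t ≤ s implies E(t) < F(s)). Suppose F is nondecreasing and for every t > 0 and every sequence (t_n) with t_n > t for all n and t_n → t, one has liminf_n E(t_n) < F(t). If T is an (E,F)-contraction on a complete metric space (X,d), then T is a Meir-Keeler contraction. -/

import Mathlib

/-!
If the lower limit of `E` is less than `F ε` along every sequence decreasing strictly to `ε`, then
`E` itself is less than `F ε` on the right of `ε`: otherwise `ε` could be approached through points
at which `E` is at least `F ε`. Here `E` has to be bounded above near `ε`, since a real `liminf` is
a junk value otherwise, and `E < F` with `F` nondecreasing provides the bound. Together with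
`E ε < F ε` this gives `E < F ε` on some `[ε, ε + δ)`. If `d(x, y)` lies there and
`d(Tx, Ty) ≥ ε`, then `F ε ≤ F (d(Tx, Ty)) ≤ E (d(x, y)) < F ε`, which is absurd.
-/

section

open Filter Set Topology

/-- The `(E,F)`-contractions of a pseudometric space. The condition `T x ≠ T y` of the metric case
is expressed as `0 < dist (T x) (T y)`, so that only values of `F` at positive reals occur. -/
def IsEFContraction {X : Type*} [PseudoMetricSpace X] (E F : ℝ → ℝ) (T : X → X) : Prop :=
  ∀ x y : X, 0 < dist (T x) (T y) → F (dist (T x) (T y)) ≤ E (dist x y)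

/-- The Meir-Keeler contractions of a pseudometric space: distances slightly above `ε` are brought
below `ε`. -/
def IsMeirKeelerContraction {X : Type*} [PseudoMetricSpace X] (T : X → X) : Prop :=
  ∀ ε : ℝ, 0 < ε → ∃ δ : ℝ, 0 < δ ∧ ∀ x y : X,
    ε ≤ dist x y → dist x y < ε + δ → dist (T x) (T y) < ε

theorem eventually_lt_of_forall_seq_liminf_lt {α β : Type*} [ConditionallyCompleteLinearOrder β]
    {l : Filter α} [l.IsCountablyGenerated] {s : Set α} {f : α → β} {c : β} (hs : s ∈ l)
    (hf : l.IsBoundedUnder (· ≤ ·) f)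
    (hlim : ∀ u : ℕ → α, (∀ n, u n ∈ s) → Tendsto u atTop l → liminf (f ∘ u) atTop < c) :
    ∀ᶠ x in l, f x < c := by
  by_contra h
  have hfreq : ∃ᶠ x in l, c ≤ f x ∧ x ∈ s :=
    ((not_eventually.1 h).mono fun _ => le_of_not_gt).and_eventually hs
  obtain ⟨u, hul, hu⟩ := exists_seq_forall_of_frequently hfreq
  have hbdd : atTop.IsBoundedUnder (· ≤ ·) (f ∘ u) := hul.isBoundedUnder_comp hf
  have hle : c ≤ liminf (f ∘ u) atTop :=
    le_liminf_of_le hbdd.isCoboundedUnder_ge (.of_forall fun n => (hu n).1)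
  exact hle.not_gt (hlim u (fun n => (hu n).2) hul)

theorem isBoundedUnder_le_nhdsGT_of_le_monotoneOn {α β : Type*} [LinearOrder α]
    [TopologicalSpace α] [OrderClosedTopology α] [NoMaxOrder α] [Preorder β] {E F : α → β} {a : α}
    (hEF : ∀ t, a < t → E t ≤ F t) (hF : MonotoneOn F (Ioi a)) :
    (𝓝[>] a).IsBoundedUnder (· ≤ ·) E := by
  obtain ⟨b, hab⟩ := exists_gt a
  refine isBoundedUnder_of_eventually_le (a := F b) ?_
  filter_upwards [Ioo_mem_nhdsGT hab] with t ht
  exact (hEF t ht.1).trans (hF ht.1 hab ht.2.le)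

theorem eventually_nhdsGE_lt_of_forall_seq_liminf_lt {α β : Type*} [LinearOrder α]
    [TopologicalSpace α] [OrderClosedTopology α] [NoMaxOrder α] [FirstCountableTopology α]
    [ConditionallyCompleteLinearOrder β] {E F : α → β} {a : α}
    (hEF : ∀ t, a ≤ t → E t < F t) (hF : MonotoneOn F (Ioi a))
    (hlim : ∀ u : ℕ → α, (∀ n, a < u n) → Tendsto u atTop (𝓝 a) →
      liminf (fun n => E (u n)) atTop < F a) :
    ∀ᶠ t in 𝓝[≥] a, E t < F a := by
  have hbdd : (𝓝[>] a).IsBoundedUnder (· ≤ ·) E :=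
    isBoundedUnder_le_nhdsGT_of_le_monotoneOn (fun t ht => (hEF t (le_of_lt ht)).le) hF
  have hright : ∀ᶠ t in 𝓝[>] a, E t < F a :=
    eventually_lt_of_forall_seq_liminf_lt self_mem_nhdsWithin hbdd
      fun u hu hua => hlim u hu (tendsto_nhds_of_tendsto_nhdsWithin hua)
  rw [← Ioi_insert, nhdsWithin_insert, eventually_sup, eventually_pure]
  exact ⟨hEF a le_rfl, hright⟩

theorem IsEFContraction.isMeirKeelerContraction {X : Type*} [PseudoMetricSpace X] {E F : ℝ → ℝ}
    {T : X → X} (hT : IsEFContraction E F T) (hF : MonotoneOn F (Ioi 0))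
    (hE : ∀ ε : ℝ, 0 < ε → ∀ᶠ t in 𝓝[≥] ε, E t < F ε) : IsMeirKeelerContraction T := by
  intro ε hε
  obtain ⟨b, hb, hlt⟩ := mem_nhdsGE_iff_exists_Ico_subset.1 (hE ε hε)
  refine ⟨b - ε, sub_pos.2 hb, fun x y hle hxy => ?_⟩
  by_contra! hge
  have hpos : 0 < dist (T x) (T y) := hε.trans_le hge
  have hxyb : dist x y < b := by linarith
  exact lt_irrefl (F ε) <| calc
    F ε ≤ F (dist (T x) (T y)) := hF hε hpos hge
    _ ≤ E (dist x y) := hT x y hpos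
    _ < F ε := hlt ⟨hle, hxyb⟩

theorem stmt_12_general {X : Type*} [PseudoMetricSpace X] {E F : ℝ → ℝ} {T : X → X}
    (hEF : ∀ t : ℝ, 0 < t → E t < F t) (hF : MonotoneOn F (Ioi 0))
    (hlim : ∀ t : ℝ, 0 < t → ∀ u : ℕ → ℝ, (∀ n, t < u n) →
      Tendsto u atTop (𝓝 t) → liminf (fun n => E (u n)) atTop < F t)
    (hT : IsEFContraction E F T) : IsMeirKeelerContraction T :=
  hT.isMeirKeelerContraction hF fun ε hε =>
    eventually_nhdsGE_lt_of_forall_seq_liminf_lt (fun t ht => hEF t (hε.trans_le ht))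
      (hF.mono (Ioi_subset_Ioi hε.le)) (hlim ε hε)

end

open Filter in
/-- Let `(E,F)` satisfy condition `(C₁)`, `F` nondecreasing on `(0,∞)`,
and suppose for every `t > 0` and every sequence `tₙ → t` with `tₙ > t` one has
`liminf E(tₙ) < F t`. Then every `(E,F)`-contraction on a complete metric space is a
Meir-Keeler contraction. -/
theorem stmt_12 (E F : ℝ → ℝ)
    (hC₁ : ∀ t s : ℝ, 0 < t → 0 < s → t ≤ s → E t < F s)
    (hF : ∀ s t : ℝ, 0 < s → s ≤ t → F s ≤ F t)
    (hlim : ∀ t : ℝ, 0 < t → ∀ u : ℕ → ℝ, (∀ n, t < u n) →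
      Tendsto u atTop (nhds t) → liminf (fun n => E (u n)) atTop < F t)
    {X : Type*} [MetricSpace X] [CompleteSpace X] (T : X → X)
    (hT : ∀ x y : X, T x ≠ T y → F (dist (T x) (T y)) ≤ E (dist x y)) :
    ∀ ε : ℝ, 0 < ε → ∃ δ : ℝ, 0 < δ ∧ ∀ x y : X,
      ε ≤ dist x y → dist x y < ε + δ → dist (T x) (T y) < ε :=
  stmt_12_general (fun t ht => hC₁ t t ht ht le_rfl) (fun s hs t _ hst => hF s t hs hst) hlim
    fun x y h => hT x y (dist_pos.1 h)
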